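/- Let G = (V,E) be a finite simple graph on n = |V| ≥ 1 vertices and let β ∈ [0, 1/2]. Then there exists a tree decomposition (X,T) of G of width equal to tw(G) such that at least one of the following holds: (a) there exists a bag Ω ∈ X such that Ω is a potential maximal clique of G and either V ∖ Ω = ∅ or some connected component C of G[V ∖ Ω] satisfies |C| ≤ βn; (b) there exists a bag S ∈ X and two distinct connected components C₁, C₂ of G[V ∖ S] such that N(C₁) = N(C₂) = S and |C₂| ≥ |C₁| ≥ βn. -/

import Mathlib

variable {V : Type} [Fintype V] [DecidableEq V]

/-- The neighborhood `N(B)` of a set of vertices `B`. -/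
def nbhdSet (G : SimpleGraph V) (B : Finset V) : Set V :=
  {v | v ∉ B ∧ ∃ u ∈ B, G.Adj u v}

/-- `Q_G(S,v)` (relative to a vertex subset `W`): the set of vertices `w ∈ W ∖ (S ∪ {v})`
such that `v` and `w` are connected by a path in `G[S ∪ {v,w}]`. -/
def QOn (G : SimpleGraph V) (W S : Finset V) (v : V) : Set V :=
  {w | w ∈ W ∧ w ∉ S ∧ w ≠ v ∧
    (G.induce ((S : Set V) ∪ {v, w})).Reachable ⟨v, by simp⟩ ⟨w, by simp⟩}

/-- `π` is a permutation of `W`, i.e. a bijection from `W` onto `{0, …, |W| - 1}`. -/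
def IsPermOn (W : Finset V) (π : V → ℕ) : Prop :=
  Set.BijOn π ↑W ↑(Finset.range W.card)

/-- `TW_{G[W]}(S) = min_{π ∈ Π(W)} max_{v ∈ S} |Q_{G[W]}(π_{<v}, v)|`. -/
noncomputable def TWOn (G : SimpleGraph V) (W S : Finset V) : ℕ :=
  sInf { m | ∃ π : V → ℕ, IsPermOn W π ∧
    m = S.sup fun v => (QOn G W (W.filter fun w => π w < π v) v).ncard }

/-- `TW_G(S)`. -/
noncomputable def TW (G : SimpleGraph V) (S : Finset V) : ℕ :=
  TWOn G Finset.univ S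

/-- `TWR_G(L,S)`: as `TW_G(S)` but minimizing only over permutations having `L` as a prefix. -/
noncomputable def TWR (G : SimpleGraph V) (L S : Finset V) : ℕ :=
  sInf { m | ∃ π : V → ℕ, IsPermOn Finset.univ π ∧
    (∀ w, w ∈ L ↔ π w < L.card) ∧
    m = S.sup fun v =>
      (QOn G Finset.univ (L ∪ Finset.univ.filter fun w => π w < π v) v).ncard }

/-- A tree decomposition of the induced subgraph `G[W]`. -/
structure TreeDecomp (G : SimpleGraph V) (W : Finset V) where
  ι : Type
  [instFintype : Fintype ι]
  tree : SimpleGraph ι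
  isTree : tree.IsTree
  bags : ι → Finset V
  bags_subset : ∀ i, bags i ⊆ W
  covers : ∀ v ∈ W, ∃ i, v ∈ bags i
  covers_edges : ∀ u v : V, u ∈ W → v ∈ W → G.Adj u v → ∃ i, u ∈ bags i ∧ v ∈ bags i
  subtree : ∀ (v : V) (i j : ι) (hi : v ∈ bags i) (hj : v ∈ bags j),
    (tree.induce {k | v ∈ bags k}).Reachable ⟨i, hi⟩ ⟨j, hj⟩

/-- The width of a tree decomposition: (maximum bag size) − 1. -/
noncomputable def TreeDecomp.width {G : SimpleGraph V} {W : Finset V}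
    (D : TreeDecomp G W) : ℤ :=
  letI := D.instFintype
  ((Finset.univ.sup fun i => (D.bags i).card : ℕ) : ℤ) - 1

/-- The treewidth of `G`. -/
noncomputable def tw (G : SimpleGraph V) : ℤ :=
  sInf { w : ℤ | ∃ D : TreeDecomp G Finset.univ, D.width = w }

/-- `tw(G[W], χ)`: the minimum width of a tree decomposition of `G[W]` having `χ` as a bag. -/
noncomputable def twBagOn (G : SimpleGraph V) (W χ : Finset V) : ℤ :=
  sInf { w : ℤ | ∃ D : TreeDecomp G W, (∃ i, D.bags i = χ) ∧ D.width = w }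

/-- `tw(G, χ)`. -/
noncomputable def twBag (G : SimpleGraph V) (χ : Finset V) : ℤ :=
  twBagOn G Finset.univ χ

/-- `P_π(v,w)`: there is a path from `v` to `w` in `G` all of whose internal vertices `u`
satisfy `π u < π v` and `π u < π w`. -/
def Ppred (G : SimpleGraph V) (π : V → ℕ) (v w : V) : Prop :=
  ∃ p : G.Walk v w, ∀ u ∈ p.support, u ≠ v → u ≠ w → π u < π v ∧ π u < π w

/-- `R_π(v)`. -/
noncomputable def Rval (G : SimpleGraph V) (π : V → ℕ) (v : V) : ℕ :=
  {w | π v < π w ∧ Ppred G π v w}.ncard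

/-- `C` is the vertex set of a connected component of `G[A]`. -/
def IsCompOf (G : SimpleGraph V) (A C : Finset V) : Prop :=
  C.Nonempty ∧ C ⊆ A ∧ (G.induce (C : Set V)).Connected ∧
    ∀ u ∈ C, ∀ v ∈ A, G.Adj u v → v ∈ C

/-- `Ω` is a potential maximal clique of `G`. -/
def PotMaxClique (G : SimpleGraph V) (Ω : Finset V) : Prop :=
  (∀ C : Finset V, IsCompOf G (Finset.univ \ Ω) C → nbhdSet G C ≠ ↑Ω) ∧
  ∀ u ∈ Ω, ∀ v ∈ Ω, u ≠ v →
    G.Adj u v ∨ ∃ C : Finset V, IsCompOf G (Finset.univ \ Ω) C ∧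
      u ∈ nbhdSet G C ∧ v ∈ nbhdSet G C

section Aux

open SimpleGraph

lemma acyclic_sum {α γ : Type} {T : SimpleGraph α} {U : SimpleGraph γ}
    (hT : T.IsAcyclic) (hU : U.IsAcyclic) : (T ⊕g U).IsAcyclic := by
  rw [isAcyclic_iff_forall_adj_isBridge] at *
  have key1 : ∀ (a b : α) (x y : α ⊕ γ),
      ((T ⊕g U).deleteEdges {s(Sum.inl a, Sum.inl b)}).Walk x y →
      (∃ c, x = Sum.inl c ∧ (T.deleteEdges {s(a, b)}).Reachable a c) →
      (∃ c, y = Sum.inl c ∧ (T.deleteEdges {s(a, b)}).Reachable a c) := by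
    intro a b x y p
    induction p with
    | nil => exact id
    | @cons u v w h p ih =>
      rintro ⟨c, rfl, hc⟩
      apply ih
      rcases v with d | d
      · refine ⟨d, rfl, hc.trans (Adj.reachable ?_)⟩
        simpa [deleteEdges_adj] using h
      · simp [deleteEdges_adj] at h
  have key2 : ∀ (a b : γ) (x y : α ⊕ γ),
      ((T ⊕g U).deleteEdges {s(Sum.inr a, Sum.inr b)}).Walk x y →
      (∃ c, x = Sum.inr c ∧ (U.deleteEdges {s(a, b)}).Reachable a c) →
      (∃ c, y = Sum.inr c ∧ (U.deleteEdges {s(a, b)}).Reachable a c) := by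
    intro a b x y p
    induction p with
    | nil => exact id
    | @cons u v w h p ih =>
      rintro ⟨c, rfl, hc⟩
      apply ih
      rcases v with d | d
      · simp [deleteEdges_adj] at h
      · refine ⟨d, rfl, hc.trans (Adj.reachable ?_)⟩
        simpa [deleteEdges_adj] using h
  rintro (a | a) (b | b) h
  · rw [isBridge_iff]
    rintro ⟨p⟩
    obtain ⟨c, hc, hr⟩ := key1 a b _ _ p ⟨a, rfl, Reachable.refl _⟩
    cases hc
    exact (isBridge_iff.1 (hT (by simpa using h))) hr
  · simp at h
  · simp at h
  · rw [isBridge_iff]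
    rintro ⟨p⟩
    obtain ⟨c, hc, hr⟩ := key2 a b _ _ p ⟨a, rfl, Reachable.refl _⟩
    cases hc
    exact (isBridge_iff.1 (hU (by simpa using h))) hr

lemma tree_join {α γ : Type} {T : SimpleGraph α} {U : SimpleGraph γ}
    (hT : T.IsTree) (hU : U.IsTree) (a : α) (b : γ) :
    ((T ⊕g U) ⊔ edge (Sum.inl a) (Sum.inr b)).IsTree := by
  refine ⟨hT.1.sum_sup_edge hU.1, ?_⟩
  exact IsAcyclic.sup_edge_of_not_reachable (not_reachable_sum_inl_inr _ _) (acyclic_sum hT.2 hU.2)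

/-- gluing two tree decompositions along an edge -/
def glueTD {G : SimpleGraph V} {W₁ W₂ : Finset V} (D₁ : TreeDecomp G W₁) (D₂ : TreeDecomp G W₂)
    (i₁ : D₁.ι) (i₂ : D₂.ι)
    (h1 : ∀ v, v ∈ W₁ → v ∈ W₂ → v ∈ D₁.bags i₁ ∧ v ∈ D₂.bags i₂)
    (hc : ∀ v, v ∈ W₁ ∨ v ∈ W₂)
    (he : ∀ u v, G.Adj u v → (u ∈ W₁ ∧ v ∈ W₁) ∨ (u ∈ W₂ ∧ v ∈ W₂)) :
    TreeDecomp G (Finset.univ : Finset V) :=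
  letI := D₁.instFintype
  letI := D₂.instFintype
  { ι := D₁.ι ⊕ D₂.ι
    tree := (D₁.tree ⊕g D₂.tree) ⊔ edge (Sum.inl i₁) (Sum.inr i₂)
    isTree := tree_join D₁.isTree D₂.isTree i₁ i₂
    bags := Sum.elim D₁.bags D₂.bags
    bags_subset := fun i => Finset.subset_univ _
    covers := by
      intro v _
      rcases hc v with h | h
      · obtain ⟨i, hi⟩ := D₁.covers v h
        exact ⟨Sum.inl i, hi⟩
      · obtain ⟨i, hi⟩ := D₂.covers v h
        exact ⟨Sum.inr i, hi⟩
    covers_edges := by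
      intro u v _ _ h
      rcases he u v h with ⟨h1, h2⟩ | ⟨h1, h2⟩
      · obtain ⟨i, hi⟩ := D₁.covers_edges u v h1 h2 h
        exact ⟨Sum.inl i, hi⟩
      · obtain ⟨i, hi⟩ := D₂.covers_edges u v h1 h2 h
        exact ⟨Sum.inr i, hi⟩
    subtree := by
      intro v
      have L : ∀ (i j : D₁.ι) (hi : v ∈ D₁.bags i) (hj : v ∈ D₁.bags j),
          (((D₁.tree ⊕g D₂.tree) ⊔ edge (Sum.inl i₁) (Sum.inr i₂)).induce
            {k | v ∈ Sum.elim D₁.bags D₂.bags k}).Reachable ⟨Sum.inl i, hi⟩ ⟨Sum.inl j, hj⟩ := by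
        intro i j hi hj
        exact (D₁.subtree v i j hi hj).map
          (G' := ((D₁.tree ⊕g D₂.tree) ⊔ edge (Sum.inl i₁) (Sum.inr i₂)).induce
            {k | v ∈ Sum.elim D₁.bags D₂.bags k})
          ⟨fun k => ⟨Sum.inl k.1, k.2⟩, by
            intro a b h
            left
            simpa using h⟩
      have R : ∀ (i j : D₂.ι) (hi : v ∈ D₂.bags i) (hj : v ∈ D₂.bags j),
          (((D₁.tree ⊕g D₂.tree) ⊔ edge (Sum.inl i₁) (Sum.inr i₂)).induce
            {k | v ∈ Sum.elim D₁.bags D₂.bags k}).Reachable ⟨Sum.inr i, hi⟩ ⟨Sum.inr j, hj⟩ := by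
        intro i j hi hj
        exact (D₂.subtree v i j hi hj).map
          (G' := ((D₁.tree ⊕g D₂.tree) ⊔ edge (Sum.inl i₁) (Sum.inr i₂)).induce
            {k | v ∈ Sum.elim D₁.bags D₂.bags k})
          ⟨fun k => ⟨Sum.inr k.1, k.2⟩, by
            intro a b h
            left
            simpa using h⟩
      have X : ∀ (i : D₁.ι) (j : D₂.ι) (hi : v ∈ D₁.bags i) (hj : v ∈ D₂.bags j),
          (((D₁.tree ⊕g D₂.tree) ⊔ edge (Sum.inl i₁) (Sum.inr i₂)).induce
            {k | v ∈ Sum.elim D₁.bags D₂.bags k}).Reachable ⟨Sum.inl i, hi⟩ ⟨Sum.inr j, hj⟩ := by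
        intro i j hi hj
        obtain ⟨h1, h2⟩ := h1 v (D₁.bags_subset _ hi) (D₂.bags_subset _ hj)
        refine ((L i i₁ hi h1).trans (Adj.reachable ?_)).trans (R i₂ j h2 hj)
        right
        simp [edge_adj]
      rintro (i | i) (j | j) hi hj
      · exact L i j hi hj
      · exact X i j hi hj
      · exact (X j i hj hi).symm
      · exact R i j hi hj }

/-- restriction -/
def restrTD {G : SimpleGraph V} (D : TreeDecomp G (Finset.univ : Finset V)) (A : Finset V) :
    TreeDecomp G A :=
  letI := D.instFintype
  { ι := D.ι
    tree := D.tree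
    isTree := D.isTree
    bags := fun k => D.bags k ∩ A
    bags_subset := fun i => Finset.inter_subset_right
    covers := by
      intro v hv
      obtain ⟨i, hi⟩ := D.covers v (Finset.mem_univ _)
      exact ⟨i, Finset.mem_inter.2 ⟨hi, hv⟩⟩
    covers_edges := by
      intro u v hu hv h
      obtain ⟨i, hi, hj⟩ := D.covers_edges u v (Finset.mem_univ _) (Finset.mem_univ _) h
      exact ⟨i, Finset.mem_inter.2 ⟨hi, hu⟩, Finset.mem_inter.2 ⟨hj, hv⟩⟩
    subtree := by
      intro v i j hi hj
      have hA : v ∈ A := (Finset.mem_inter.1 hi).2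
      exact (D.subtree v i j (Finset.mem_inter.1 hi).1 (Finset.mem_inter.1 hj).1).map
        (G' := D.tree.induce {k | v ∈ D.bags k ∩ A})
        ⟨fun k => ⟨k.1, Finset.mem_inter.2 ⟨k.2, hA⟩⟩, fun h => h⟩ }

/-- one-bag decomposition -/
def oneTD (G : SimpleGraph V) (A : Finset V) : TreeDecomp G A where
  ι := Unit
  tree := ⊥
  isTree := IsTree.of_subsingleton
  bags := fun _ => A
  bags_subset := fun _ => subset_rfl
  covers := fun _ h => ⟨(), h⟩
  covers_edges := fun _ _ hu hv _ => ⟨(), hu, hv⟩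
  subtree := fun _ _ _ _ _ => Reachable.refl _

lemma width_le_iff {G : SimpleGraph V} {W : Finset V} (D : TreeDecomp G W) (n : ℤ) (hn : -1 ≤ n) :
    D.width ≤ n ↔ ∀ i, ((D.bags i).card : ℤ) ≤ n + 1 := by
  letI := D.instFintype
  unfold TreeDecomp.width
  obtain ⟨m, hm⟩ : ∃ m : ℕ, n + 1 = m := ⟨(n+1).toNat, by omega⟩
  rw [hm, sub_le_iff_le_add, hm, Nat.cast_le, Finset.sup_le_iff]
  simp

lemma neg_one_le_width {G : SimpleGraph V} {W : Finset V} (D : TreeDecomp G W) :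
    -1 ≤ D.width := by
  unfold TreeDecomp.width
  omega

lemma tw_le {G : SimpleGraph V} (D : TreeDecomp G (Finset.univ : Finset V)) : tw G ≤ D.width :=
  csInf_le ⟨-1, by rintro _ ⟨D, rfl⟩; exact neg_one_le_width D⟩ ⟨D, rfl⟩

lemma exists_opt (G : SimpleGraph V) : ∃ D : TreeDecomp G (Finset.univ : Finset V), D.width = tw G :=
  Int.csInf_mem (s := { w : ℤ | ∃ D : TreeDecomp G Finset.univ, D.width = w })
    ⟨_, oneTD G _, rfl⟩ ⟨-1, by rintro _ ⟨D, rfl⟩; exact neg_one_le_width D⟩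

lemma opt_of_bags {G : SimpleGraph V} (D D' : TreeDecomp G (Finset.univ : Finset V))
    (hD : D.width = tw G) (h : ∀ i, ∃ j, D'.bags i ⊆ D.bags j) : D'.width = tw G := by
  refine le_antisymm ?_ (tw_le _)
  rw [← hD, width_le_iff _ _ (neg_one_le_width D)]
  intro i
  obtain ⟨j, hj⟩ := h i
  have := (width_le_iff D _ (neg_one_le_width D)).1 le_rfl j
  have := Finset.card_le_card hj
  omega

/-- components exist -/
lemma exists_comp (G : SimpleGraph V) (A : Finset V) (x : V) (hx : x ∈ A) :
    ∃ C, IsCompOf G A C ∧ x ∈ C := by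
  classical
  let R : V → V → Prop := fun a b => G.Adj a b ∧ b ∈ A
  let C : Finset V := Finset.univ.filter fun y => Relation.ReflTransGen R x y
  have mC : ∀ y, y ∈ C ↔ Relation.ReflTransGen R x y := by intro y; simp [C]
  have hxC : x ∈ C := (mC x).2 .refl
  refine ⟨C, ⟨⟨x, hxC⟩, ?_, ?_, ?_⟩, hxC⟩
  · intro y hy
    rw [mC] at hy
    cases hy with
    | refl => exact hx
    | tail _ h => exact h.2
  · have : ∀ y, Relation.ReflTransGen R x y → ∃ hy : y ∈ (C : Set V),
        (G.induce (C : Set V)).Reachable ⟨x, hxC⟩ ⟨y, hy⟩ := by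
      intro y hy
      induction hy with
      | refl => exact ⟨hxC, Reachable.refl _⟩
      | @tail b c hb h ih =>
        obtain ⟨h1, h2⟩ := ih
        refine ⟨(mC c).2 (hb.tail h), h2.trans (Adj.reachable ?_)⟩
        exact h.1
    rw [connected_iff_exists_forall_reachable]
    refine ⟨⟨x, hxC⟩, ?_⟩
    rintro ⟨y, hy⟩
    exact (this y ((mC y).1 hy)).2
  · intro u hu v hv h
    rw [mC] at *
    exact hu.tail ⟨h, hv⟩

/-- a connected set inside `A` meeting a component is contained in it -/
lemma conn_sub_comp {G : SimpleGraph V} {A C E : Finset V} (hC : IsCompOf G A C)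
    (hE : (G.induce (E : Set V)).Connected) (hEA : E ⊆ A) {a : V} (haE : a ∈ E) (haC : a ∈ C) :
    E ⊆ C := by
  intro b hb
  obtain ⟨p⟩ := hE.preconnected ⟨a, haE⟩ ⟨b, hb⟩
  have : ∀ x y : (E : Set V), (G.induce (E : Set V)).Walk x y → x.1 ∈ C → y.1 ∈ C := by
    intro x y p
    induction p with
    | nil => exact id
    | @cons u v w h p ih =>
      intro hu
      exact ih (hC.2.2.2 _ hu _ (hEA v.2) h)
  exact this _ _ p haC

/-- Helly type lemma -/
lemma helly {G : SimpleGraph V} (D : TreeDecomp G (Finset.univ : Finset V)) (S C : Finset V)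
    (hC : (G.induce (C : Set V)).Connected) (hS : ∀ s ∈ S, ∃ c ∈ C, G.Adj c s)
    (i : D.ι) (hi : S ⊆ D.bags i) : ∃ k, S ⊆ D.bags k ∧ ∃ c ∈ C, c ∈ D.bags k := by
  classical
  obtain ⟨⟨c₀, hc₀⟩⟩ := hC.nonempty
  obtain ⟨t, ht⟩ := D.covers c₀ (Finset.mem_univ _)
  obtain ⟨p, hp⟩ := (D.isTree.1.preconnected i t).exists_isPath
  induction p with
  | nil => exact ⟨_, hi, c₀, hc₀, ht⟩
  | @cons i j t h p ih =>
    by_cases hiC : ∃ c ∈ C, c ∈ D.bags i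
    · exact ⟨i, hi, hiC⟩
    push Not at hiC
    rw [Walk.cons_isPath_iff] at hp
    refine ih ?_ ht hp.1
    intro s hs
    by_contra hsj
    obtain ⟨c, hc, hcs⟩ := hS s hs
    obtain ⟨m, hcm, hsm⟩ := D.covers_edges c s (Finset.mem_univ _) (Finset.mem_univ _) hcs
    have hbr := isBridge_iff.1 ((isAcyclic_iff_forall_adj_isBridge.1 D.isTree.2) h)
    apply hbr
    have r1 : (D.tree.deleteEdges {s(i, j)}).Reachable i m := by
      refine (D.subtree s i m (hi hs) hsm).map ⟨fun k => k.1, ?_⟩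
      intro a b hab
      rw [deleteEdges_adj]
      refine ⟨hab, ?_⟩
      intro he
      have ha : s ∈ D.bags a.1 := a.2
      have hb : s ∈ D.bags b.1 := b.2
      simp only [Set.mem_singleton_iff, Sym2.eq_iff] at he
      rcases he with ⟨_, h2⟩ | ⟨h2, _⟩
      · exact hsj (h2 ▸ hb)
      · exact hsj (h2 ▸ ha)
    have rv : ∀ v ∈ C, ∀ k l, v ∈ D.bags k → v ∈ D.bags l →
        (D.tree.deleteEdges {s(i, j)}).Reachable k l := by
      intro v hv k l hk hl
      refine (D.subtree v k l hk hl).map ⟨fun k => k.1, ?_⟩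
      intro a b hab
      rw [deleteEdges_adj]
      refine ⟨hab, ?_⟩
      intro he
      have ha : v ∈ D.bags a.1 := a.2
      have hb : v ∈ D.bags b.1 := b.2
      simp only [Set.mem_singleton_iff, Sym2.eq_iff] at he
      rcases he with ⟨h2, _⟩ | ⟨_, h2⟩
      · exact hiC v hv (h2 ▸ ha)
      · exact hiC v hv (h2 ▸ hb)
    have r2 : (D.tree.deleteEdges {s(i, j)}).Reachable m t := by
      have : ∀ x y : (C : Set V), (G.induce (C : Set V)).Walk x y → ∀ k l, x.1 ∈ D.bags k →
          y.1 ∈ D.bags l → (D.tree.deleteEdges {s(i, j)}).Reachable k l := by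
        intro x y q
        induction q with
        | nil => exact fun k l hk hl => rv _ (Subtype.prop _) k l hk hl
        | @cons u v w h q ih =>
          intro k l hk hl
          obtain ⟨n, hn1, hn2⟩ := D.covers_edges u.1 v.1 (Finset.mem_univ _) (Finset.mem_univ _) h
          exact (rv _ u.2 k n hk hn1).trans (ih n l hn2 hl)
      obtain ⟨q⟩ := hC.preconnected ⟨c, hc⟩ ⟨c₀, hc₀⟩
      exact this _ _ q m t hcm ht
    have r3 : (D.tree.deleteEdges {s(i, j)}).Reachable j t := by
      rw [reachable_deleteEdges_iff_exists_walk]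
      exact ⟨p, fun he => hp.2 (p.fst_mem_support_of_mem_edges he)⟩
    exact (r1.trans r2).trans r3.symm

/-- condition (ii) -/
def CondTwo (G : SimpleGraph V) (Ω : Finset V) : Prop :=
  ∀ u ∈ Ω, ∀ v ∈ Ω, u ≠ v →
    G.Adj u v ∨ ∃ C : Finset V, IsCompOf G (Finset.univ \ Ω) C ∧
      u ∈ nbhdSet G C ∧ v ∈ nbhdSet G C

/-- the pairs in a common bag -/
def fillSet {G : SimpleGraph V} (D : TreeDecomp G (Finset.univ : Finset V)) : Set (V × V) :=
  {p | ∃ k, p.1 ∈ D.bags k ∧ p.2 ∈ D.bags k}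

lemma improve {G : SimpleGraph V} (D : TreeDecomp G (Finset.univ : Finset V))
    (k : D.ι) (h : ¬ CondTwo G (D.bags k)) :
    ∃ D' : TreeDecomp G (Finset.univ : Finset V),
      (∀ i, ∃ j, D'.bags i ⊆ D.bags j) ∧ fillSet D' ⊂ fillSet D := by
  classical
  unfold CondTwo at h
  push Not at h
  obtain ⟨u, hu, v, hv, huv, hadj, hno⟩ := h
  set Ω := D.bags k with hΩ
  let X : Finset V := Finset.univ.filter fun w => ∃ E, IsCompOf G (Finset.univ \ Ω) E ∧ w ∈ E ∧
    v ∈ nbhdSet G E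
  have mX : ∀ w, w ∈ X ↔ ∃ E, IsCompOf G (Finset.univ \ Ω) E ∧ w ∈ E ∧ v ∈ nbhdSet G E := by
    intro w; simp [X]
  have X1 : ∀ w ∈ X, w ∉ Ω := by
    intro w hw
    obtain ⟨E, hE, hwE, _⟩ := (mX w).1 hw
    have := hE.2.1 hwE
    simpa using this
  let A : Finset V := Finset.univ.filter fun w => w ≠ v ∧ w ∉ X
  let B : Finset V := Finset.univ.filter fun w => (w ∈ Ω ∧ w ≠ u) ∨ w ∈ X
  have mA : ∀ w, w ∈ A ↔ w ≠ v ∧ w ∉ X := by intro w; simp [A]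
  have mB : ∀ w, w ∈ B ↔ (w ∈ Ω ∧ w ≠ u) ∨ w ∈ X := by intro w; simp [B]
  have cross : ∀ a b, a ∉ B → b ∉ A → ¬ G.Adj a b := by
    intro a b ha hb hab
    rw [mB] at ha
    rw [mA] at hb
    push Not at ha hb
    obtain ⟨ha1, ha2⟩ := ha
    by_cases haΩ : a ∈ Ω
    · have := ha1 haΩ
      subst this
      by_cases hbv : b = v
      · subst hbv; exact hadj hab
      · obtain ⟨E, hE, hbE, hvE⟩ := (mX b).1 (hb hbv)
        refine hno E hE ⟨?_, b, hbE, hab.symm⟩ hvE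
        intro haE
        have := hE.2.1 haE
        simp [hu] at this
    · apply ha2
      rw [mX]
      by_cases hbv : b = v
      · subst hbv
        obtain ⟨E, hE, haE⟩ := exists_comp G (Finset.univ \ Ω) a (by simpa using haΩ)
        refine ⟨E, hE, haE, ?_, a, haE, hab⟩
        intro hbE
        have := hE.2.1 hbE
        simp [hv] at this
      · obtain ⟨E, hE, hbE, hvE⟩ := (mX b).1 (hb hbv)
        exact ⟨E, hE, hE.2.2.2 b hbE a (by simpa using haΩ) hab.symm, hvE⟩
  have hcov : ∀ w, w ∈ A ∨ w ∈ B := by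
    intro w
    rw [mA, mB]
    by_cases h1 : w ∈ X
    · tauto
    · by_cases h2 : w = v
      · subst h2; right; left; exact ⟨hv, huv.symm⟩
      · tauto
  let D' := glueTD (restrTD D A) (restrTD D B) k k
    (by
      intro w hwA hwB
      have : w ∈ D.bags k := by
        have h1 := (mA w).1 hwA
        have h2 := (mB w).1 hwB
        tauto
      exact ⟨Finset.mem_inter.2 ⟨this, hwA⟩, Finset.mem_inter.2 ⟨this, hwB⟩⟩)
    hcov
    (by
      intro a b hab
      have h1 := cross a b
      have h2 := cross b a
      have h3 := hab.symm
      have h4 := hcov a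
      have h5 := hcov b
      tauto)
  have hbags : ∀ i : D'.ι, ∃ j, D'.bags i = D.bags j ∩ A ∨ D'.bags i = D.bags j ∩ B := by
    rintro (i | i)
    · exact ⟨i, Or.inl rfl⟩
    · exact ⟨i, Or.inr rfl⟩
  have hsub : ∀ i, ∃ j, D'.bags i ⊆ D.bags j := by
    intro i
    obtain ⟨j, hj | hj⟩ := hbags i
    · exact ⟨j, hj ▸ Finset.inter_subset_left⟩
    · exact ⟨j, hj ▸ Finset.inter_subset_left⟩
  refine ⟨D', hsub, ?_⟩
  rw [Set.ssubset_iff_of_subset]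
  · refine ⟨(u, v), ⟨k, hu, hv⟩, ?_⟩
    rintro ⟨i, h1, h2⟩
    obtain ⟨j, hj | hj⟩ := hbags i
    · rw [hj] at h2
      have := (mA v).1 (Finset.mem_inter.1 h2).2
      exact this.1 rfl
    · rw [hj] at h1
      have := (mB u).1 (Finset.mem_inter.1 h1).2
      have := X1 u
      tauto
  · rintro p ⟨i, h1, h2⟩
    obtain ⟨j, hj⟩ := hsub i
    exact ⟨j, hj h1, hj h2⟩

lemma exists_good (G : SimpleGraph V) : ∃ D : TreeDecomp G (Finset.univ : Finset V),
    D.width = tw G ∧ ∀ k, CondTwo G (D.bags k) := by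
  classical
  have hex : ∃ n : ℕ, ∃ D : TreeDecomp G (Finset.univ : Finset V), D.width = tw G ∧
      (fillSet D).ncard = n := by
    obtain ⟨D, hD⟩ := exists_opt G
    exact ⟨_, D, hD, rfl⟩
  obtain ⟨D, hD, hn⟩ := Nat.find_spec hex
  refine ⟨D, hD, ?_⟩
  intro k
  by_contra hk
  obtain ⟨D', h1, h2⟩ := improve D k hk
  have hlt := Set.ncard_lt_ncard h2 (Set.toFinite _)
  rw [hn] at hlt
  exact Nat.find_min hex hlt ⟨D', opt_of_bags D D' hD h1, rfl⟩

lemma pmc_of_max {G : SimpleGraph V} (D : TreeDecomp G (Finset.univ : Finset V))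
    (h2 : ∀ k, CondTwo G (D.bags k)) (k : D.ι)
    (hmax : ∀ l, D.bags k ⊆ D.bags l → D.bags l ⊆ D.bags k) : PotMaxClique G (D.bags k) := by
  refine ⟨?_, h2 k⟩
  intro C hC hN
  obtain ⟨l, hl, c, hc, hcl⟩ := helly D (D.bags k) C hC.2.2.1 (by
    intro s hs
    have : s ∈ nbhdSet G C := by rw [hN]; exact hs
    exact this.2) k subset_rfl
  have h3 := hmax l hl hcl
  have h4 := hC.2.1 hc
  simp [h3] at h4

lemma exists_max {G : SimpleGraph V} (D : TreeDecomp G (Finset.univ : Finset V)) (k : D.ι) :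
    ∃ m, D.bags k ⊆ D.bags m ∧ ∀ l, D.bags m ⊆ D.bags l → D.bags l ⊆ D.bags m := by
  letI := D.instFintype
  obtain ⟨m, hm, h⟩ := Set.Finite.exists_maximalFor D.bags {m | D.bags k ⊆ D.bags m}
    (Set.toFinite _) ⟨k, Finset.Subset.refl (D.bags k)⟩
  exact ⟨m, hm, fun l hl => h (Finset.Subset.trans hm hl) hl⟩

end Aux

theorem stmt13 [Nonempty V] (G : SimpleGraph V) (β : ℝ)
    (hβ0 : 0 ≤ β) (hβ1 : β ≤ 1/2) :
    ∃ D : TreeDecomp G (Finset.univ : Finset V), D.width = tw G ∧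
      ((∃ i : D.ι, PotMaxClique G (D.bags i) ∧
          (Finset.univ \ D.bags i = ∅ ∨
            ∃ C : Finset V, IsCompOf G (Finset.univ \ D.bags i) C ∧
              (C.card : ℝ) ≤ β * Fintype.card V)) ∨
       (∃ i : D.ι, ∃ C₁ C₂ : Finset V,
          IsCompOf G (Finset.univ \ D.bags i) C₁ ∧
          IsCompOf G (Finset.univ \ D.bags i) C₂ ∧ C₁ ≠ C₂ ∧
          nbhdSet G C₁ = ↑(D.bags i) ∧ nbhdSet G C₂ = ↑(D.bags i) ∧
          β * Fintype.card V ≤ (C₁.card : ℝ) ∧ C₁.card ≤ C₂.card)) := by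
  classical
  obtain ⟨D, hD, h2⟩ := exists_good G
  obtain ⟨k₀⟩ := D.isTree.1.nonempty
  obtain ⟨k, -, hk⟩ := exists_max D k₀
  have hP := pmc_of_max D h2 k hk
  by_cases hV : Finset.univ \ D.bags k = ∅
  · exact ⟨D, hD, Or.inl ⟨k, hP, Or.inl hV⟩⟩
  obtain ⟨x, hx⟩ := Finset.nonempty_iff_ne_empty.2 hV
  obtain ⟨C, hC, -⟩ := exists_comp G _ x hx
  by_cases hCs : (C.card : ℝ) ≤ β * Fintype.card V
  · exact ⟨D, hD, Or.inl ⟨k, hP, Or.inr ⟨C, hC, hCs⟩⟩⟩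
  have hCΩ : ∀ c ∈ C, c ∉ D.bags k := fun c hc => by simpa using hC.2.1 hc
  have hNΩ : ∀ v ∈ nbhdSet G C, v ∈ D.bags k := by
    rintro v ⟨hvC, u, hu, huv⟩
    by_contra hv
    exact hvC (hC.2.2.2 u hu v (by simpa using hv) huv)
  obtain ⟨S, hS⟩ : ∃ S : Finset V, nbhdSet G C = ↑S := ⟨(Set.toFinite (nbhdSet G C)).toFinset, by simp⟩
  have mS : ∀ v, v ∈ S ↔ v ∈ nbhdSet G C := by intro v; rw [hS]; simp
  have hSΩ : S ⊆ D.bags k := fun v hv => hNΩ v ((mS v).1 hv)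
  obtain ⟨y, hyΩ, hyS⟩ : ∃ y ∈ D.bags k, y ∉ S := by
    by_contra hcon
    push Not at hcon
    apply hP.1 C hC
    rw [hS, Finset.Subset.antisymm hSΩ hcon]
  obtain ⟨C', hC', hyC'⟩ := exists_comp G (Finset.univ \ S) y (by simpa using hyS)
  have hC'S : ∀ c ∈ C', c ∉ S := fun c hc => by simpa using hC'.2.1 hc
  have hCS : IsCompOf G (Finset.univ \ S) C := by
    refine ⟨hC.1, ?_, hC.2.2.1, ?_⟩
    · intro c hc
      simpa using fun h => hCΩ c hc (hSΩ h)
    · intro u hu v hv huv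
      by_contra hvC
      have : v ∈ S := (mS v).2 ⟨hvC, u, hu, huv⟩
      simp [this] at hv
  have hN' : nbhdSet G C' = ↑S := by
    ext s
    constructor
    · rintro ⟨hs, u, hu, hus⟩
      by_contra hsS
      exact hs (hC'.2.2.2 u hu s (by simpa using hsS) hus)
    · intro hs
      have hs : s ∈ S := hs
      refine ⟨fun h => hC'S s h hs, ?_⟩
      rcases hP.2 y hyΩ s (hSΩ hs) (by rintro rfl; exact hyS hs) with h | ⟨E, hE, hyE, hsE⟩
      · exact ⟨y, hyC', h⟩
      · have hES : E ⊆ Finset.univ \ S := by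
          intro e he
          have := hE.2.1 he
          simp at this ⊢
          exact fun h => this (hSΩ h)
        obtain ⟨_, a, ha, hay⟩ := hyE
        obtain ⟨_, b, hb, hbs⟩ := hsE
        exact ⟨b, conn_sub_comp hC' hE.2.2.1 hES ha (hC'.2.2.2 y hyC' a (hES ha) hay.symm) hb, hbs⟩
  have hyC : y ∉ C := fun h => hCΩ y h hyΩ
  have hdisj : ∀ z, z ∈ C' → z ∉ C := by
    intro z hz hz'
    exact hyC (conn_sub_comp hCS hC'.2.2.1 hC'.2.1 hz hz' hyC')
  have hne : C ≠ C' := by rintro rfl; exact hyC hyC'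
  by_cases hCs' : (C'.card : ℝ) ≤ β * Fintype.card V
  · obtain ⟨l, hl, c, hcC, hcl⟩ := helly D S C hC.2.2.1 (fun s hs => ((mS s).1 hs).2) k hSΩ
    obtain ⟨m, hlm, hm⟩ := exists_max D l
    have hPm := pmc_of_max D h2 m hm
    have hSm : S ⊆ D.bags m := hl.trans hlm
    have hcm := hlm hcl
    have hav : ∀ z ∈ C', z ∉ D.bags m := by
      intro z hz hzm
      have hzS : z ∈ Finset.univ \ S := hC'.2.1 hz
      rcases hPm.2 c hcm z hzm (by rintro rfl; exact hdisj _ hz hcC) with h | ⟨E, hE, hcE, hzE⟩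
      · exact hdisj z hz (hCS.2.2.2 c hcC z hzS h)
      · have hES : E ⊆ Finset.univ \ S := by
          intro e he
          have := hE.2.1 he
          simp at this ⊢
          exact fun h => this (hSm h)
        obtain ⟨_, a, ha, hac⟩ := hcE
        obtain ⟨_, b, hb, hbz⟩ := hzE
        have hEC := conn_sub_comp hCS hE.2.2.1 hES ha (hCS.2.2.2 c hcC a (hES ha) hac.symm)
        exact hdisj z hz (hCS.2.2.2 b (hEC hb) z hzS hbz)
    refine ⟨D, hD, Or.inl ⟨m, hPm, Or.inr ⟨C', ⟨hC'.1, ?_, hC'.2.2.1, ?_⟩, hCs'⟩⟩⟩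
    · intro z hz
      simpa using hav z hz
    · intro u hu v hv huv
      refine hC'.2.2.2 u hu v ?_ huv
      simp at hv ⊢
      exact fun h => hv (hSm h)
  · let D' := glueTD D (oneTD G S) k () (fun v _ hv => ⟨hSΩ hv, hv⟩)
      (fun v => Or.inl (Finset.mem_univ _))
      (fun u v _ => Or.inl ⟨Finset.mem_univ _, Finset.mem_univ _⟩)
    have hD' : D'.width = tw G := by
      refine opt_of_bags D D' hD ?_
      rintro (i | i)
      · exact ⟨i, Finset.Subset.refl _⟩
      · exact ⟨k, hSΩ⟩
    refine ⟨D', hD', Or.inr ⟨Sum.inr (), ?_⟩⟩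
    push Not at hCs hCs'
    change ∃ C₁ C₂ : Finset V,
          IsCompOf G (Finset.univ \ S) C₁ ∧
          IsCompOf G (Finset.univ \ S) C₂ ∧ C₁ ≠ C₂ ∧
          nbhdSet G C₁ = ↑S ∧ nbhdSet G C₂ = ↑S ∧
          β * Fintype.card V ≤ (C₁.card : ℝ) ∧ C₁.card ≤ C₂.card
    rcases le_total C.card C'.card with h | h
    · exact ⟨C, C', hCS, hC', hne, hS, hN', hCs.le, h⟩
    · exact ⟨C', C, hC', hCS, hne.symm, hN', hS, hCs'.le, h⟩
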